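/- Let (k, [·,·]) be a real Lie algebra and k* its dual space, with coadjoint action ad*_u defined by ⟨ad*_u η, w⟩ := −⟨η, [u,w]⟩ for u,w ∈ k, η ∈ k*. Set g̃₋₁ := ℝ and g̃₀ := k ⊕ k*, and define: l̃₁ := 0; l̃₂((u,ξ),(v,η)) := ( [u,v], ad*_u η − ad*_v ξ ); l̃₂((u,ξ),r) := 0 for r ∈ ℝ; l̃₃((u,ξ),(v,η),(w,ζ)) := −½( ⟨ζ,[u,v]⟩ + ⟨ξ,[v,w]⟩ + ⟨η,[w,u]⟩ ). Then (g̃₀, g̃₋₁, l̃₁, l̃₂, l̃₃) is a 2-term L∞-algebra (the 2-term L∞-algebra of string type). -/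

import Mathlib

/-- A 2-term L∞-algebra over ℝ. -/
structure TwoTermLinfty (G0 G1 : Type*) [AddCommGroup G0] [Module ℝ G0]
    [AddCommGroup G1] [Module ℝ G1] where
  l1 : G1 →ₗ[ℝ] G0
  l2 : G0 →ₗ[ℝ] G0 →ₗ[ℝ] G0
  l2' : G0 →ₗ[ℝ] G1 →ₗ[ℝ] G1
  l3 : G0 →ₗ[ℝ] G0 →ₗ[ℝ] G0 →ₗ[ℝ] G1
  skew : ∀ x y, l2 x y = - l2 y x
  alt₁ : ∀ x y z, l3 x y z = - l3 y x z
  alt₂ : ∀ x y z, l3 x y z = - l3 x z y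
  ident_a : ∀ x m, l1 (l2' x m) = l2 x (l1 m)
  ident_b : ∀ m n, l2' (l1 m) n = - l2' (l1 n) m
  ident_c : ∀ x y z,
    l2 x (l2 y z) + l2 y (l2 z x) + l2 z (l2 x y) = l1 (l3 x y z)
  ident_d : ∀ x y m,
    l3 x y (l1 m) = l2' x (l2' y m) - l2' y (l2' x m) - l2' (l2 x y) m
  ident_e : ∀ w x y z,
    l3 (l2 w x) y z - l3 (l2 w y) x z + l3 (l2 w z) x y + l3 (l2 x y) w z
      - l3 (l2 x z) w y + l3 (l2 y z) w x
    = l2' w (l3 x y z) - l2' x (l3 w y z) + l2' y (l3 w x z) - l2' z (l3 w x y)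

/-- The coadjoint action: `⟨ad*_u η, w⟩ = −⟨η, [u,w]⟩`. -/
noncomputable def coad {k : Type*} [LieRing k] [LieAlgebra ℝ k] (u : k)
    (η : Module.Dual ℝ k) : Module.Dual ℝ k :=
  -(η ∘ₗ LieAlgebra.ad ℝ k u)

/-!
The semidirect sum `k ⋉ k*` is a Lie algebra, and the pairing of `k` with `k*` is a symmetric
invariant bilinear form on it. Up to the factor `-½`, the map `l̃₃` is the Cartan 3-form
`(x, y, z) ↦ ⟨[x, y], z⟩` of this pairing. For any symmetric invariant form the Cartan 3-form is
an alternating 3-cocycle, which is all that a 2-term L∞-algebra with `l₁ = 0` and trivial action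
on `g₋₁` asks of `l₃`.
-/

section CartanThreeForm

variable {R L : Type*} [CommRing R] [LieRing L] [LieAlgebra R L]

/-- The Cartan 3-form `(x, y, z) ↦ Φ([x, y], z)` of a bilinear form `Φ` on a Lie algebra. It is
encoded as a curried trilinear map. -/
def cartanThreeForm (Φ : LinearMap.BilinForm R L) : L →ₗ[R] L →ₗ[R] L →ₗ[R] R :=
  (LieModule.toEnd R L L : L →ₗ[R] L →ₗ[R] L).compr₂ Φ

variable (Φ : LinearMap.BilinForm R L)

theorem cartanThreeForm_apply (x y z : L) : cartanThreeForm Φ x y z = Φ ⁅x, y⁆ z :=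
  rfl

theorem cartanThreeForm_swap_left (x y z : L) :
    cartanThreeForm Φ x y z = -cartanThreeForm Φ y x z := by
  rw [cartanThreeForm_apply, cartanThreeForm_apply, ← lie_skew, map_neg, LinearMap.neg_apply]

variable {Φ}

theorem cartanThreeForm_swap_right (hsymm : Φ.IsSymm) (hinv : Φ.lieInvariant L) (x y z : L) :
    cartanThreeForm Φ x y z = -cartanThreeForm Φ x z y := by
  rw [cartanThreeForm_apply, cartanThreeForm_apply, hinv, hsymm.eq]

theorem cartanThreeForm_cocycle (hsymm : Φ.IsSymm) (hinv : Φ.lieInvariant L) (w x y z : L) :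
    cartanThreeForm Φ ⁅w, x⁆ y z - cartanThreeForm Φ ⁅w, y⁆ x z + cartanThreeForm Φ ⁅w, z⁆ x y
      + cartanThreeForm Φ ⁅x, y⁆ w z - cartanThreeForm Φ ⁅x, z⁆ w y
      + cartanThreeForm Φ ⁅y, z⁆ w x = 0 := by
  have jacobi : ⁅⁅w, x⁆, y⁆ - ⁅⁅w, y⁆, x⁆ + ⁅⁅x, y⁆, w⁆ = 0 := by
    rw [lie_lie w x y, ← lie_skew ⁅w, y⁆ x, ← lie_skew ⁅x, y⁆ w]
    abel
  have cartanThreeForm_lie_right (u v t : L) : cartanThreeForm Φ ⁅u, z⁆ v t = Φ ⁅⁅v, t⁆, u⁆ z :=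
    calc cartanThreeForm Φ ⁅u, z⁆ v t
      _ = -Φ ⁅v, ⁅u, z⁆⁆ t := cartanThreeForm_swap_left Φ _ _ _
      _ = Φ ⁅u, z⁆ ⁅v, t⁆ := by rw [hinv, neg_neg]
      _ = -Φ z ⁅u, ⁅v, t⁆⁆ := hinv _ _ _
      _ = Φ ⁅⁅v, t⁆, u⁆ z := by rw [hsymm.eq, ← lie_skew, map_neg, LinearMap.neg_apply, neg_neg]
  have jacobi_apply : Φ ⁅⁅w, x⁆, y⁆ z - Φ ⁅⁅w, y⁆, x⁆ z + Φ ⁅⁅x, y⁆, w⁆ z = 0 := by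
    simpa using congrArg (Φ · z) jacobi
  simp only [cartanThreeForm_lie_right, cartanThreeForm_apply]
  linear_combination 2 * jacobi_apply

end CartanThreeForm

/-- The 2-term L∞-algebra of a Lie algebra with a symmetric invariant bilinear form `Φ`: the
differential and the action on `ℝ` vanish, and `l₃` is the Cartan 3-form of `Φ`. -/
def TwoTermLinfty.ofInvariantForm {L : Type*} [LieRing L] [LieAlgebra ℝ L]
    (Φ : LinearMap.BilinForm ℝ L) (hsymm : Φ.IsSymm) (hinv : Φ.lieInvariant L) :
    TwoTermLinfty L ℝ where
  l1 := 0
  l2 := LieModule.toEnd ℝ L L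
  l2' := 0
  l3 := cartanThreeForm Φ
  skew x y := (lie_skew x y).symm
  alt₁ := cartanThreeForm_swap_left Φ
  alt₂ := cartanThreeForm_swap_right hsymm hinv
  ident_a _ _ := by simp
  ident_b _ _ := by simp
  ident_c := lie_jacobi
  ident_d _ _ _ := by simp
  ident_e w x y z := by simpa using cartanThreeForm_cocycle hsymm hinv w x y z

theorem lieInvariant_smul {R L M : Type*} [CommRing R] [LieRing L] [AddCommGroup M]
    [Module R M] [LieRingModule L M] {Φ : LinearMap.BilinForm R M}
    (hinv : Φ.lieInvariant L) (c : R) :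
    (c • Φ).lieInvariant L := by
  intro x y z
  simp only [LinearMap.smul_apply, hinv x y z, smul_neg]

section DualSumPairing

variable (R V : Type*) [CommRing R] [AddCommGroup V] [Module R V]

/-- The pairing `⟨(u, ξ), (v, η)⟩ = ξ v + η u` on `V ⊕ V*`. It is `LinearMap.dualProd` with
the two factors exchanged. -/
def dualSumPairing : LinearMap.BilinForm R (V × Module.Dual R V) :=
  (LinearMap.dualProd R V).comp (LinearEquiv.prodComm R V (Module.Dual R V))
    (LinearEquiv.prodComm R V (Module.Dual R V))

variable {R V}

theorem dualSumPairing_apply (a b : V × Module.Dual R V) :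
    dualSumPairing R V a b = b.2 a.1 + a.2 b.1 :=
  rfl

theorem isSymm_dualSumPairing : (dualSumPairing R V).IsSymm :=
  ⟨fun _ _ ↦ (LinearMap.isSymm_dualProd R V).eq _ _⟩

end DualSumPairing

section SemidirectSum

variable (R L M : Type*) [CommRing R] [LieRing L] [LieAlgebra R L]
variable [AddCommGroup M] [Module R M] [LieRingModule L M]

/-- The semidirect sum `L ⋉ M` of a Lie ring `L` with a Lie module `M`, in which `M` is an abelian
ideal. It is not a global instance, because `L × M` carries the direct product bracket when `M` is
itself a Lie ring. -/
abbrev semidirectLieRing : LieRing (L × M) where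
  bracket a b := (⁅a.1, b.1⁆, ⁅a.1, b.2⁆ - ⁅b.1, a.2⁆)
  add_lie a b c := Prod.ext (add_lie a.1 b.1 c.1) <| by
    simp only [Prod.fst_add, Prod.snd_add, add_lie, lie_add]
    abel
  lie_add a b c := Prod.ext (lie_add a.1 b.1 c.1) <| by
    simp only [Prod.fst_add, Prod.snd_add, add_lie, lie_add]
    abel
  lie_self a := Prod.ext (lie_self a.1) (sub_self _)
  leibniz_lie a b c := Prod.ext (leibniz_lie a.1 b.1 c.1) <| by
    simp only [Prod.snd_add, lie_lie, lie_sub]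
    abel

attribute [local instance] semidirectLieRing

variable {L M} in
theorem semidirect_lie_def (a b : L × M) :
    ⁅a, b⁆ = (⁅a.1, b.1⁆, ⁅a.1, b.2⁆ - ⁅b.1, a.2⁆) :=
  rfl

/-- The semidirect sum `L ⋉ M` as a Lie algebra over the base ring of `L` and `M`. -/
abbrev semidirectLieAlgebra [LieModule R L M] : LieAlgebra R (L × M) where
  lie_smul r a b := by
    simp only [semidirect_lie_def, Prod.smul_fst, Prod.smul_snd, Prod.smul_mk, lie_smul, smul_lie,
      smul_sub]

attribute [local instance] semidirectLieAlgebra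

variable {R L}

theorem dualSumPairing_lie_left (a b c : L × Module.Dual R L) :
    dualSumPairing R L ⁅a, b⁆ c = c.2 ⁅a.1, b.1⁆ + a.2 ⁅b.1, c.1⁆ + b.2 ⁅c.1, a.1⁆ := by
  rw [dualSumPairing_apply, semidirect_lie_def, LinearMap.sub_apply, Module.Dual.lie_apply,
    Module.Dual.lie_apply, ← lie_skew c.1, map_neg]
  ring

theorem lieInvariant_dualSumPairing :
    (dualSumPairing R L).lieInvariant (L × Module.Dual R L) := by
  intro a b c
  rw [isSymm_dualSumPairing.eq b, dualSumPairing_lie_left, dualSumPairing_lie_left,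
    ← lie_skew a.1 b.1, ← lie_skew b.1 c.1, ← lie_skew c.1 a.1]
  simp only [map_neg]
  ring

/-- The 2-term L∞-algebra of string type, obtained from the pairing on `k ⋉ k*` rescaled by `-½`. -/
noncomputable def TwoTermLinfty.stringType (k : Type*) [LieRing k] [LieAlgebra ℝ k] :
    TwoTermLinfty (k × Module.Dual ℝ k) ℝ :=
  .ofInvariantForm (-(1/2 : ℝ) • dualSumPairing ℝ k) (isSymm_dualSumPairing.smul _)
    (lieInvariant_smul lieInvariant_dualSumPairing _)

theorem coad_eq_lie {k : Type*} [LieRing k] [LieAlgebra ℝ k] (u : k) (η : Module.Dual ℝ k) :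
    coad u η = ⁅u, η⁆ :=
  rfl

theorem TwoTermLinfty.stringType_l2_apply {k : Type*} [LieRing k] [LieAlgebra ℝ k]
    (a b : k × Module.Dual ℝ k) :
    (stringType k).l2 a b = (⁅a.1, b.1⁆, coad a.1 b.2 - coad b.1 a.2) := by
  rw [coad_eq_lie, coad_eq_lie]
  exact semidirect_lie_def a b

theorem TwoTermLinfty.stringType_l3_apply {k : Type*} [LieRing k] [LieAlgebra ℝ k]
    (a b c : k × Module.Dual ℝ k) :
    (stringType k).l3 a b c =
      -(1/2 : ℝ) • (c.2 ⁅a.1, b.1⁆ + a.2 ⁅b.1, c.1⁆ + b.2 ⁅c.1, a.1⁆) :=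
  congrArg (-(1/2 : ℝ) • ·) (dualSumPairing_lie_left a b c)

end SemidirectSum

/-- The 2-term L∞-algebra of string type: `g̃₋₁ = ℝ`, `g̃₀ = k ⊕ k*`, with
`l̃₁ = 0`, `l̃₂((u,ξ),(v,η)) = ([u,v], ad*_u η − ad*_v ξ)`, `l̃₂((u,ξ),r) = 0`,
`l̃₃((u,ξ),(v,η),(w,ζ)) = −½(⟨ζ,[u,v]⟩ + ⟨ξ,[v,w]⟩ + ⟨η,[w,u]⟩)`. -/
theorem stringType_twoTermLinfty (k : Type*) [LieRing k] [LieAlgebra ℝ k] :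
    ∃ T : TwoTermLinfty (k × Module.Dual ℝ k) ℝ,
      (∀ r : ℝ, T.l1 r = 0) ∧
      (∀ a b : k × Module.Dual ℝ k, T.l2 a b =
        (⁅a.1, b.1⁆, coad a.1 b.2 - coad b.1 a.2)) ∧
      (∀ (a : k × Module.Dual ℝ k) (r : ℝ), T.l2' a r = 0) ∧
      (∀ a b c : k × Module.Dual ℝ k, T.l3 a b c =
        -(1/2 : ℝ) • (c.2 ⁅a.1, b.1⁆ + a.2 ⁅b.1, c.1⁆ + b.2 ⁅c.1, a.1⁆)) :=
  ⟨TwoTermLinfty.stringType k, fun _ ↦ rfl, TwoTermLinfty.stringType_l2_apply, fun _ _ ↦ rfl,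
    TwoTermLinfty.stringType_l3_apply⟩
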